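/- Weak-constraint quadratic inequality for the control error. Suppose e_y^0,…,e_y^K ∈ Y, e_p^1,…,e_p^{K+1} ∈ Y and e_u^1,…,e_u^K ∈ U, together with linear functionals r̃_y^1,…,r̃_y^K and r̃_p^1,…,r̃_p^K on Y and r̃_u^1,…,r̃_u^K on U, satisfy: (i) m(e_y^k − e_y^{k−1}, φ) + τ a(e_y^k, φ) = τ r̃_y^k(φ) + τ b(e_u^k, φ) for all φ ∈ Y and k = 1,…,K; (ii) m(φ, e_p^k − e_p^{k+1}) + τ a(φ, e_p^k) = τ r̃_p^k(φ) − τ (C e_y^k, C φ)_D for all φ ∈ Y and k = 1,…,K; (iii) (e_u^k, ψ)_U − b(ψ, e_p^k) = r̃_u^k(ψ) for all ψ ∈ U and k = 1,…,K; with e_p^{K+1} = 0 and e_y^0 = 0. Set R̃_y = (τ Σ_{k=1}^K ‖r̃_y^k‖_{Y'}²)^{1/2}, R̃_p = (τ Σ_{k=1}^K ‖r̃_p^k‖_{Y'}²)^{1/2} and R̃_u = (τ Σ_{k=1}^K ‖r̃_u^k‖_{U'}²)^{1/2}. Then τ Σ_{k=1}^K ‖e_u^k‖_U² ≤ (R̃_u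 + (√2 γ_b/α_LB) R̃_p) · (τ Σ_{k=1}^K ‖e_u^k‖_U²)^{1/2} + (2√2/α_LB) R̃_y R̃_p + (γ_c²/(2 α_LB²)) R̃_y². -/

import Mathlib

set_option autoImplicit false

open Finset RealInnerProductSpace

/-- Dual norm of a functional `r` over the nonzero elements of `S`,
with respect to the norm function `nrm`. -/
noncomputable def dualNorm {Y : Type*} [Zero Y] (nrm : Y → ℝ) (S : Set Y) (r : Y → ℝ) : ℝ :=
  sSup {x : ℝ | ∃ v ∈ S, v ≠ 0 ∧ x = r v / nrm v}

/-!
Pairing the state equation with the adjoint error, the adjoint equation with the state error and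
the optimality condition with the control error makes `a` and `b` cancel, and summation by parts
removes the time differences. What remains is
`τ ∑ (‖e_u‖² + ‖C e_y‖²) = τ ∑ (r_u(e_u) + r_p(e_y) - r_y(e_p))`.
Coercivity bounds `e_y` by `R_y` and `e_u`, and `e_p` by `R_p` and `C e_y`; the square
`‖C e_y‖²` on the left then absorbs, by Young's inequality, the product of `R_y` and `C e_y`.
-/

section DiscreteL2Norm

variable {κ : Type*} {τ : ℝ} {s : Finset κ} {f g : κ → ℝ}

/-- The discrete `L²` norm in time of a real sequence `f`, with constant weight `τ` at each of the
time indices in `s`. -/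
noncomputable def discreteL2Norm (τ : ℝ) (s : Finset κ) (f : κ → ℝ) : ℝ :=
  Real.sqrt (τ * ∑ k ∈ s, f k ^ 2)

theorem discreteL2Norm_nonneg : 0 ≤ discreteL2Norm τ s f :=
  Real.sqrt_nonneg _

theorem sq_discreteL2Norm (hτ : 0 ≤ τ) : discreteL2Norm τ s f ^ 2 = τ * ∑ k ∈ s, f k ^ 2 :=
  Real.sq_sqrt (mul_nonneg hτ (sum_nonneg fun _ _ => sq_nonneg _))

theorem discreteL2Norm_const_mul (c : ℝ) :
    discreteL2Norm τ s (fun k => c * f k) = |c| * discreteL2Norm τ s f := by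
  simp only [discreteL2Norm, mul_pow, ← mul_sum]
  rw [mul_left_comm, Real.sqrt_mul (sq_nonneg c), Real.sqrt_sq_eq_abs]

theorem mul_sum_mul_le_discreteL2Norm_mul (hτ : 0 ≤ τ) :
    τ * ∑ k ∈ s, f k * g k ≤ discreteL2Norm τ s f * discreteL2Norm τ s g := by
  rw [discreteL2Norm, discreteL2Norm, Real.sqrt_mul hτ, Real.sqrt_mul hτ, mul_mul_mul_comm,
    Real.mul_self_sqrt hτ]
  exact mul_le_mul_of_nonneg_left (Real.sum_mul_le_sqrt_mul_sqrt s f g) hτ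

theorem mul_sum_le_discreteL2Norm_mul (hτ : 0 ≤ τ) {x : κ → ℝ} (h : ∀ k ∈ s, x k ≤ f k * g k) :
    τ * ∑ k ∈ s, x k ≤ discreteL2Norm τ s f * discreteL2Norm τ s g :=
  (mul_le_mul_of_nonneg_left (sum_le_sum h) hτ).trans (mul_sum_mul_le_discreteL2Norm_mul hτ)

theorem discreteL2Norm_add_le (hτ : 0 ≤ τ) :
    discreteL2Norm τ s (fun k => f k + g k) ≤ discreteL2Norm τ s f + discreteL2Norm τ s g := by
  refine Real.sqrt_le_iff.2 ⟨add_nonneg discreteL2Norm_nonneg discreteL2Norm_nonneg, ?_⟩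
  calc τ * ∑ k ∈ s, (f k + g k) ^ 2
      = τ * ∑ k ∈ s, f k ^ 2 + 2 * (τ * ∑ k ∈ s, f k * g k) + τ * ∑ k ∈ s, g k ^ 2 := by
        simp only [mul_sum, ← sum_add_distrib]
        exact sum_congr rfl fun k _ => by ring
    _ ≤ discreteL2Norm τ s f ^ 2 + 2 * (discreteL2Norm τ s f * discreteL2Norm τ s g)
          + discreteL2Norm τ s g ^ 2 := by
        rw [sq_discreteL2Norm hτ, sq_discreteL2Norm hτ]
        linarith [mul_sum_mul_le_discreteL2Norm_mul (s := s) (f := f) (g := g) hτ]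
    _ = (discreteL2Norm τ s f + discreteL2Norm τ s g) ^ 2 := by ring

theorem abs_mul_discreteL2Norm {c : ℝ} (hf : ∀ k ∈ s, 0 ≤ f k) (hcf : ∀ k ∈ s, 0 ≤ c * f k) :
    |c| * discreteL2Norm τ s f = c * discreteL2Norm τ s f := by
  rcases le_or_gt 0 c with hc | hc
  · rw [abs_of_nonneg hc]
  · have hf0 : ∀ k ∈ s, f k ^ 2 = 0 := fun k hk => by
      rw [le_antisymm (nonpos_of_mul_nonneg_right (hcf k hk) hc) (hf k hk), zero_pow two_ne_zero]
    simp [discreteL2Norm, sum_eq_zero hf0]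

/-- The energy argument for implicit Euler steps: `m k` is the contribution of the time difference
and `g k` the dual norm of the right-hand side. -/
theorem mul_discreteL2Norm_le_of_energy {α : ℝ} {m x : κ → ℝ} (hτ : 0 ≤ τ)
    (hm : 0 ≤ ∑ k ∈ s, m k) (h : ∀ k ∈ s, m k + τ * (α * x k ^ 2) ≤ τ * (g k * x k)) :
    α * discreteL2Norm τ s x ≤ discreteL2Norm τ s g := by
  have hsum : ∑ k ∈ s, m k + α * discreteL2Norm τ s x ^ 2 ≤ τ * ∑ k ∈ s, g k * x k := by
    rw [sq_discreteL2Norm hτ, mul_left_comm]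
    simpa only [mul_sum, sum_add_distrib] using sum_le_sum h
  have hcs : τ * ∑ k ∈ s, g k * x k ≤ discreteL2Norm τ s g * discreteL2Norm τ s x :=
    mul_sum_mul_le_discreteL2Norm_mul hτ
  rcases (discreteL2Norm_nonneg (τ := τ) (s := s) (f := x)).eq_or_lt with hx | hx
  · rw [← hx, mul_zero]
    exact discreteL2Norm_nonneg
  · exact le_of_mul_le_mul_right (by linarith) hx

end DiscreteL2Norm

section DualNorm

variable {Y : Type*} [AddCommGroup Y] [Module ℝ Y]

theorem abs_apply_le_dualNorm_mul (p : Seminorm ℝ Y) (S : Submodule ℝ Y) (r : Y →ₗ[ℝ] ℝ) {M : ℝ}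
    (hM : ∀ v ∈ S, |r v| ≤ M * p v) {v : Y} (hv : v ∈ S) :
    |r v| ≤ dualNorm p (S : Set Y) r * p v := by
  have hbdd : BddAbove {x : ℝ | ∃ v ∈ (S : Set Y), v ≠ 0 ∧ x = r v / p v} := by
    refine ⟨|M|, ?_⟩
    rintro x ⟨w, hw, -, rfl⟩
    refine div_le_of_le_mul₀ (apply_nonneg p w) (abs_nonneg M) ((le_abs_self _).trans ?_)
    exact (hM w hw).trans (mul_le_mul_of_nonneg_right (le_abs_self M) (apply_nonneg p w))
  have hle : ∀ w ∈ S, r w ≤ dualNorm p (S : Set Y) r * p w := by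
    intro w hw
    rcases (apply_nonneg p w).eq_or_lt with hpw | hpw
    · simpa [← hpw] using (le_abs_self _).trans (hM w hw)
    · have hw0 : w ≠ 0 := fun h => by simp [h] at hpw
      exact (div_le_iff₀ hpw).1 (le_csSup hbdd ⟨w, hw, hw0, rfl⟩)
  refine abs_le'.2 ⟨hle v hv, ?_⟩
  simpa using hle (-v) (S.neg_mem hv)

end DualNorm

theorem abs_apply_le_dualNorm_univ_mul_norm {Y : Type*} [SeminormedAddCommGroup Y]
    [NormedSpace ℝ Y] {r : Y →ₗ[ℝ] ℝ} (hr : Continuous r) (v : Y) :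
    |r v| ≤ dualNorm (fun v : Y => ‖v‖) Set.univ r * ‖v‖ :=
  abs_apply_le_dualNorm_mul (normSeminorm ℝ Y) ⊤ r
    (fun w _ => (⟨r, hr⟩ : Y →L[ℝ] ℝ).le_opNorm w) Submodule.mem_top

section Telescoping

variable {H : Type*} [SeminormedAddCommGroup H] [InnerProductSpace ℝ H]

theorem norm_sq_sub_norm_sq_le_two_mul_inner (x y : H) :
    ‖x‖ ^ 2 - ‖y‖ ^ 2 ≤ 2 * ⟪x, x - y⟫ := by
  rw [inner_sub_right, real_inner_self_eq_norm_sq]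
  linarith [norm_sub_sq_real x y, sq_nonneg ‖x - y‖]

theorem norm_sq_sub_norm_sq_le_two_mul_sum_inner_backward (y : ℕ → H) (n : ℕ) :
    ‖y n‖ ^ 2 - ‖y 0‖ ^ 2 ≤ 2 * ∑ k ∈ Icc 1 n, ⟪y k - y (k - 1), y k⟫ := by
  induction n with
  | zero => simp
  | succ n ih =>
    rw [sum_Icc_succ_top n.succ_pos, Nat.add_sub_cancel, real_inner_comm]
    linarith [norm_sq_sub_norm_sq_le_two_mul_inner (y (n + 1)) (y n)]

theorem norm_sq_sub_norm_sq_le_two_mul_sum_inner_forward (p : ℕ → H) (n : ℕ) :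
    ‖p 1‖ ^ 2 - ‖p (n + 1)‖ ^ 2 ≤ 2 * ∑ k ∈ Icc 1 n, ⟪p k, p k - p (k + 1)⟫ := by
  induction n with
  | zero => simp
  | succ n ih =>
    rw [sum_Icc_succ_top n.succ_pos]
    linarith [norm_sq_sub_norm_sq_le_two_mul_inner (p (n + 1)) (p (n + 1 + 1))]

theorem sum_inner_sub_by_parts (y p : ℕ → H) (n : ℕ) :
    ∑ k ∈ Icc 1 n, (⟪y k - y (k - 1), p k⟫ - ⟪y k, p k - p (k + 1)⟫)
      = ⟪y n, p (n + 1)⟫ - ⟪y 0, p 1⟫ := by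
  induction n with
  | zero => simp
  | succ n ih =>
    rw [sum_Icc_succ_top n.succ_pos, ih, Nat.add_sub_cancel, inner_sub_left, inner_sub_right]
    ring

end Telescoping

section ErrorSystem

variable {H Y D : Type*} [SeminormedAddCommGroup H] [InnerProductSpace ℝ H]
  [SeminormedAddCommGroup D] [InnerProductSpace ℝ D]

/-- The equations satisfied by the state error `ey`, the adjoint error `ep` and the control error
`eu` of an implicit Euler discretization of a linear-quadratic optimal control problem, with
residuals `ry`, `rp`, `ru`. The map `ι` embeds `Y` into the space `H` of the `m`-inner product. -/
structure IsOptimalityErrorSystem [AddCommGroup Y] [Module ℝ Y] (ι : Y →ₗ[ℝ] H)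
    (U : Submodule ℝ Y) (a b : Y →ₗ[ℝ] Y →ₗ[ℝ] ℝ) (C : Y →ₗ[ℝ] D) (τ : ℝ) (K : ℕ)
    (ey ep eu : ℕ → Y) (ry rp ru : ℕ → Y →ₗ[ℝ] ℝ) : Prop where
  control_mem : ∀ k, 1 ≤ k → k ≤ K → eu k ∈ U
  state : ∀ k, 1 ≤ k → k ≤ K → ∀ φ : Y,
    ⟪ι (ey k - ey (k - 1)), ι φ⟫ + τ * a (ey k) φ = τ * ry k φ + τ * b (eu k) φ
  adjoint : ∀ k, 1 ≤ k → k ≤ K → ∀ φ : Y,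
    ⟪ι φ, ι (ep k - ep (k + 1))⟫ + τ * a φ (ep k) = τ * rp k φ - τ * ⟪C (ey k), C φ⟫
  optimality : ∀ k, 1 ≤ k → k ≤ K → ∀ ψ ∈ U, ⟪ι (eu k), ι ψ⟫ - b ψ (ep k) = ru k ψ
  final : ep (K + 1) = 0
  initial : ey 0 = 0

namespace IsOptimalityErrorSystem

section Identity

variable [AddCommGroup Y] [Module ℝ Y] {ι : Y →ₗ[ℝ] H} {U : Submodule ℝ Y}
  {a b : Y →ₗ[ℝ] Y →ₗ[ℝ] ℝ} {C : Y →ₗ[ℝ] D} {τ : ℝ} {K : ℕ} {ey ep eu : ℕ → Y}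
  {ry rp ru : ℕ → Y →ₗ[ℝ] ℝ}

theorem mul_sum_norm_sq_eq_mul_sum_residual
    (h : IsOptimalityErrorSystem ι U a b C τ K ey ep eu ry rp ru) :
    τ * ∑ k ∈ Icc 1 K, (‖ι (eu k)‖ ^ 2 + ‖C (ey k)‖ ^ 2)
      = τ * ∑ k ∈ Icc 1 K, (ru k (eu k) + rp k (ey k) - ry k (ep k)) := by
  have htime : ∑ k ∈ Icc 1 K,
      (⟪ι (ey k - ey (k - 1)), ι (ep k)⟫ - ⟪ι (ey k), ι (ep k - ep (k + 1))⟫) = 0 := by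
    simpa [h.initial, h.final] using sum_inner_sub_by_parts (ι ∘ ey) (ι ∘ ep) K
  rw [← add_zero (τ * ∑ k ∈ Icc 1 K, (ru k (eu k) + _ - _)), ← htime, mul_sum, mul_sum,
    ← sum_add_distrib]
  refine sum_congr rfl fun k hk => ?_
  obtain ⟨hk1, hkK⟩ := mem_Icc.1 hk
  have hstate := h.state k hk1 hkK (ep k)
  have hadj := h.adjoint k hk1 hkK (ey k)
  have hopt := h.optimality k hk1 hkK (eu k) (h.control_mem k hk1 hkK)
  rw [real_inner_self_eq_norm_sq] at hadj hopt
  linear_combination hadj - hstate + τ * hopt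

end Identity

variable [SeminormedAddCommGroup Y] [NormedSpace ℝ Y] {ι : Y →ₗ[ℝ] H} {U : Submodule ℝ Y}
  {a b : Y →ₗ[ℝ] Y →ₗ[ℝ] ℝ} {C : Y →ₗ[ℝ] D} {τ : ℝ} {K : ℕ} {ey ep eu : ℕ → Y}
  {ry rp ru : ℕ → Y →ₗ[ℝ] ℝ} {αLB γb γc : ℝ} {ρy ρp ρu : ℕ → ℝ}

theorem mul_discreteL2Norm_state_le
    (h : IsOptimalityErrorSystem ι U a b C τ K ey ep eu ry rp ru) (hτ : 0 ≤ τ)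
    (hcoer : ∀ v, αLB * ‖v‖ ^ 2 ≤ a v v)
    (hγb : ∀ w ∈ U, ∀ v, |b w v| ≤ γb * ‖ι w‖ * ‖v‖)
    (hry : ∀ k ∈ Icc 1 K, ∀ v, |ry k v| ≤ ρy k * ‖v‖) :
    αLB * discreteL2Norm τ (Icc 1 K) (fun k => ‖ey k‖)
      ≤ discreteL2Norm τ (Icc 1 K) ρy
        + |γb| * discreteL2Norm τ (Icc 1 K) (fun k => ‖ι (eu k)‖) := by
  have htime : 0 ≤ ∑ k ∈ Icc 1 K, ⟪ι (ey k - ey (k - 1)), ι (ey k)⟫ := by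
    have htel := norm_sq_sub_norm_sq_le_two_mul_sum_inner_backward (ι ∘ ey) K
    simp only [Function.comp_apply, h.initial, map_zero, norm_zero, ← map_sub] at htel
    linarith [sq_nonneg ‖ι (ey K)‖]
  rw [← discreteL2Norm_const_mul]
  refine (mul_discreteL2Norm_le_of_energy hτ htime fun k hk => ?_).trans (discreteL2Norm_add_le hτ)
  obtain ⟨hk1, hkK⟩ := mem_Icc.1 hk
  calc ⟪ι (ey k - ey (k - 1)), ι (ey k)⟫ + τ * (αLB * ‖ey k‖ ^ 2)
      ≤ ⟪ι (ey k - ey (k - 1)), ι (ey k)⟫ + τ * a (ey k) (ey k) := by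
        gcongr
        exact hcoer _
    _ = τ * (ry k (ey k) + b (eu k) (ey k)) := by rw [h.state k hk1 hkK, mul_add]
    _ ≤ τ * (ρy k * ‖ey k‖ + γb * ‖ι (eu k)‖ * ‖ey k‖) := by
        gcongr
        · exact (le_abs_self _).trans (hry k hk _)
        · exact (le_abs_self _).trans (hγb _ (h.control_mem k hk1 hkK) _)
    _ = τ * ((ρy k + γb * ‖ι (eu k)‖) * ‖ey k‖) := by rw [add_mul]

theorem mul_discreteL2Norm_adjoint_le
    (h : IsOptimalityErrorSystem ι U a b C τ K ey ep eu ry rp ru) (hτ : 0 ≤ τ)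
    (hcoer : ∀ v, αLB * ‖v‖ ^ 2 ≤ a v v) (hγc : ∀ v, ‖C v‖ ≤ γc * ‖v‖)
    (hrp : ∀ k ∈ Icc 1 K, ∀ v, |rp k v| ≤ ρp k * ‖v‖) :
    αLB * discreteL2Norm τ (Icc 1 K) (fun k => ‖ep k‖)
      ≤ discreteL2Norm τ (Icc 1 K) ρp
        + |γc| * discreteL2Norm τ (Icc 1 K) (fun k => ‖C (ey k)‖) := by
  have htime : 0 ≤ ∑ k ∈ Icc 1 K, ⟪ι (ep k), ι (ep k - ep (k + 1))⟫ := by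
    have htel := norm_sq_sub_norm_sq_le_two_mul_sum_inner_forward (ι ∘ ep) K
    simp only [Function.comp_apply, h.final, map_zero, norm_zero, ← map_sub] at htel
    linarith [sq_nonneg ‖ι (ep 1)‖]
  rw [← discreteL2Norm_const_mul]
  refine (mul_discreteL2Norm_le_of_energy hτ htime fun k hk => ?_).trans (discreteL2Norm_add_le hτ)
  obtain ⟨hk1, hkK⟩ := mem_Icc.1 hk
  have hobs : -⟪C (ey k), C (ep k)⟫ ≤ ‖C (ey k)‖ * (γc * ‖ep k‖) :=
    ((neg_le_abs _).trans (abs_real_inner_le_norm _ _)).trans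
      (mul_le_mul_of_nonneg_left (hγc _) (norm_nonneg _))
  calc ⟪ι (ep k), ι (ep k - ep (k + 1))⟫ + τ * (αLB * ‖ep k‖ ^ 2)
      ≤ ⟪ι (ep k), ι (ep k - ep (k + 1))⟫ + τ * a (ep k) (ep k) := by
        gcongr
        exact hcoer _
    _ = τ * (rp k (ep k) + -⟪C (ey k), C (ep k)⟫) := by rw [h.adjoint k hk1 hkK]; ring
    _ ≤ τ * (ρp k * ‖ep k‖ + ‖C (ey k)‖ * (γc * ‖ep k‖)) := by
        gcongr
        exact (le_abs_self _).trans (hrp k hk _)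
    _ = τ * ((ρp k + γc * ‖C (ey k)‖) * ‖ep k‖) := by ring

theorem abs_optimality_residual_le
    (h : IsOptimalityErrorSystem ι U a b C τ K ey ep eu ry rp ru)
    (hγb : ∀ w ∈ U, ∀ v, |b w v| ≤ γb * ‖ι w‖ * ‖v‖) {k : ℕ} (hk : k ∈ Icc 1 K) {ψ : Y}
    (hψ : ψ ∈ U) : |ru k ψ| ≤ (‖ι (eu k)‖ + γb * ‖ep k‖) * ‖ι ψ‖ := by
  obtain ⟨hk1, hkK⟩ := mem_Icc.1 hk
  calc |ru k ψ| ≤ |⟪ι (eu k), ι ψ⟫| + |b ψ (ep k)| := by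
        rw [← h.optimality k hk1 hkK ψ hψ]
        exact abs_sub _ _
    _ ≤ ‖ι (eu k)‖ * ‖ι ψ‖ + γb * ‖ι ψ‖ * ‖ep k‖ :=
        add_le_add (abs_real_inner_le_norm _ _) (hγb ψ hψ _)
    _ = (‖ι (eu k)‖ + γb * ‖ep k‖) * ‖ι ψ‖ := by ring

theorem sq_discreteL2Norm_control_add_sq_le
    (h : IsOptimalityErrorSystem ι U a b C τ K ey ep eu ry rp ru) (hτ : 0 ≤ τ)
    (hry : ∀ k ∈ Icc 1 K, ∀ v, |ry k v| ≤ ρy k * ‖v‖)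
    (hrp : ∀ k ∈ Icc 1 K, ∀ v, |rp k v| ≤ ρp k * ‖v‖)
    (hru : ∀ k ∈ Icc 1 K, ∀ v ∈ U, |ru k v| ≤ ρu k * ‖ι v‖) :
    discreteL2Norm τ (Icc 1 K) (fun k => ‖ι (eu k)‖) ^ 2
        + discreteL2Norm τ (Icc 1 K) (fun k => ‖C (ey k)‖) ^ 2
      ≤ discreteL2Norm τ (Icc 1 K) ρu * discreteL2Norm τ (Icc 1 K) (fun k => ‖ι (eu k)‖)
        + discreteL2Norm τ (Icc 1 K) ρp * discreteL2Norm τ (Icc 1 K) (fun k => ‖ey k‖)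
        + discreteL2Norm τ (Icc 1 K) ρy * discreteL2Norm τ (Icc 1 K) (fun k => ‖ep k‖) := by
  have hcontrol : ∀ k ∈ Icc 1 K, eu k ∈ U := fun k hk =>
    h.control_mem k (mem_Icc.1 hk).1 (mem_Icc.1 hk).2
  rw [sq_discreteL2Norm hτ, sq_discreteL2Norm hτ, ← mul_add, ← sum_add_distrib,
    h.mul_sum_norm_sq_eq_mul_sum_residual]
  simp only [sub_eq_add_neg, sum_add_distrib, mul_add]
  refine add_le_add_three (mul_sum_le_discreteL2Norm_mul hτ fun k hk => ?_)
    (mul_sum_le_discreteL2Norm_mul hτ fun k hk => ?_)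
    (mul_sum_le_discreteL2Norm_mul hτ fun k hk => ?_)
  · exact (le_abs_self _).trans (hru k hk _ (hcontrol k hk))
  · exact (le_abs_self _).trans (hrp k hk _)
  · exact (neg_le_abs _).trans (hry k hk _)

theorem sq_discreteL2Norm_control_le
    (h : IsOptimalityErrorSystem ι U a b C τ K ey ep eu ry rp ru) (hτ : 0 ≤ τ) (hαLB : 0 < αLB)
    (hcoer : ∀ v, αLB * ‖v‖ ^ 2 ≤ a v v) (hγc : ∀ v, ‖C v‖ ≤ γc * ‖v‖)
    (hγb : ∀ w ∈ U, ∀ v, |b w v| ≤ γb * ‖ι w‖ * ‖v‖)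
    (hry : ∀ k ∈ Icc 1 K, ∀ v, |ry k v| ≤ ρy k * ‖v‖)
    (hrp : ∀ k ∈ Icc 1 K, ∀ v, |rp k v| ≤ ρp k * ‖v‖)
    (hru : ∀ k ∈ Icc 1 K, ∀ v ∈ U, |ru k v| ≤ ρu k * ‖ι v‖) :
    discreteL2Norm τ (Icc 1 K) (fun k => ‖ι (eu k)‖) ^ 2
      ≤ (discreteL2Norm τ (Icc 1 K) ρu + |γb| / αLB * discreteL2Norm τ (Icc 1 K) ρp)
          * discreteL2Norm τ (Icc 1 K) (fun k => ‖ι (eu k)‖)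
        + 2 / αLB * discreteL2Norm τ (Icc 1 K) ρy * discreteL2Norm τ (Icc 1 K) ρp
        + γc ^ 2 / (4 * αLB ^ 2) * discreteL2Norm τ (Icc 1 K) ρy ^ 2 := by
  have henergy := h.sq_discreteL2Norm_control_add_sq_le hτ hry hrp hru
  have hstate := h.mul_discreteL2Norm_state_le hτ hcoer hγb hry
  have hadj := h.mul_discreteL2Norm_adjoint_le hτ hcoer hγc hrp
  have hRy : 0 ≤ discreteL2Norm τ (Icc 1 K) ρy := discreteL2Norm_nonneg
  have hRp : 0 ≤ discreteL2Norm τ (Icc 1 K) ρp := discreteL2Norm_nonneg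
  set E := discreteL2Norm τ (Icc 1 K) (fun k => ‖ι (eu k)‖)
  set N := discreteL2Norm τ (Icc 1 K) (fun k => ‖ey k‖)
  set P := discreteL2Norm τ (Icc 1 K) (fun k => ‖ep k‖)
  set O := discreteL2Norm τ (Icc 1 K) (fun k => ‖C (ey k)‖)
  set Ry := discreteL2Norm τ (Icc 1 K) ρy
  set Rp := discreteL2Norm τ (Icc 1 K) ρp
  set Ru := discreteL2Norm τ (Icc 1 K) ρu
  have hN : N ≤ (Ry + |γb| * E) / αLB := (le_div_iff₀' hαLB).2 hstate
  have hP : P ≤ (Rp + |γc| * O) / αLB := (le_div_iff₀' hαLB).2 hadj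
  have young : |γc| / αLB * Ry * O ≤ (|γc| / αLB * Ry) ^ 2 / 4 + O ^ 2 := by
    linarith [sq_nonneg (|γc| / αLB * Ry / 2 - O)]
  calc E ^ 2 ≤ Ru * E + Rp * N + Ry * P - O ^ 2 := by linarith
    _ ≤ Ru * E + Rp * ((Ry + |γb| * E) / αLB) + Ry * ((Rp + |γc| * O) / αLB) - O ^ 2 := by gcongr
    _ = (Ru + |γb| / αLB * Rp) * E + 2 / αLB * Ry * Rp + |γc| / αLB * Ry * O - O ^ 2 := by ring
    _ ≤ (Ru + |γb| / αLB * Rp) * E + 2 / αLB * Ry * Rp + (|γc| / αLB * Ry) ^ 2 / 4 := by linarith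
    _ = (Ru + |γb| / αLB * Rp) * E + 2 / αLB * Ry * Rp + γc ^ 2 / (4 * αLB ^ 2) * Ry ^ 2 := by
        rw [mul_pow, div_pow, sq_abs]
        ring

end IsOptimalityErrorSystem

theorem mul_norm_nonneg_of_abs_bilin_le [NormedAddCommGroup Y] [NormedSpace ℝ Y] {ι : Y →ₗ[ℝ] H}
    {b : Y →ₗ[ℝ] Y →ₗ[ℝ] ℝ} {γb : ℝ} {w : Y} (hw : |b w w| ≤ γb * ‖ι w‖ * ‖w‖) :
    0 ≤ γb * ‖ι w‖ := by
  rcases eq_or_ne w 0 with rfl | hw0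
  · simp
  · exact nonneg_of_mul_nonneg_left ((abs_nonneg _).trans hw) (norm_pos_iff.2 hw0)

theorem weak_constraint_quadratic_inequality_general [NormedAddCommGroup Y] [NormedSpace ℝ Y]
    (ι : Y →ₗ[ℝ] H) (U : Submodule ℝ Y) (a b : Y →ₗ[ℝ] Y →ₗ[ℝ] ℝ) (C : Y →ₗ[ℝ] D)
    {τ : ℝ} (hτ : 0 ≤ τ) (K : ℕ) {αLB γb γc : ℝ} (hαLB : 0 < αLB)
    (hcoer : ∀ v, αLB * ‖v‖ ^ 2 ≤ a v v) (hγc : ∀ v, ‖C v‖ ≤ γc * ‖v‖)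
    (hγb : ∀ w ∈ U, ∀ v, |b w v| ≤ γb * ‖ι w‖ * ‖v‖)
    {ey ep eu : ℕ → Y} {ry rp ru : ℕ → Y →ₗ[ℝ] ℝ}
    (h : IsOptimalityErrorSystem ι U a b C τ K ey ep eu ry rp ru)
    (hry : ∀ k ∈ Icc 1 K, Continuous (ry k)) (hrp : ∀ k ∈ Icc 1 K, Continuous (rp k))
    {Ry Rp Ru : ℝ}
    (hRy : Ry = discreteL2Norm τ (Icc 1 K) fun k => dualNorm (fun v => ‖v‖) Set.univ (ry k))
    (hRp : Rp = discreteL2Norm τ (Icc 1 K) fun k => dualNorm (fun v => ‖v‖) Set.univ (rp k))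
    (hRu : Ru = discreteL2Norm τ (Icc 1 K) fun k => dualNorm (fun v => ‖ι v‖) U (ru k)) :
    τ * ∑ k ∈ Icc 1 K, ‖ι (eu k)‖ ^ 2
      ≤ (Ru + Real.sqrt 2 * γb / αLB * Rp) * discreteL2Norm τ (Icc 1 K) (fun k => ‖ι (eu k)‖)
        + (2 * Real.sqrt 2 / αLB) * Ry * Rp + γc ^ 2 / (2 * αLB ^ 2) * Ry ^ 2 := by
  have hsharp := h.sq_discreteL2Norm_control_le hτ hαLB hcoer hγc hγb
    (fun k hk => abs_apply_le_dualNorm_univ_mul_norm (hry k hk))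
    (fun k hk => abs_apply_le_dualNorm_univ_mul_norm (hrp k hk))
    (fun k hk _ => abs_apply_le_dualNorm_mul ((normSeminorm ℝ H).comp ι) U (ru k)
      fun _ => h.abs_optimality_residual_le hγb hk)
  have habs : |γb| * discreteL2Norm τ (Icc 1 K) (fun k => ‖ι (eu k)‖)
      = γb * discreteL2Norm τ (Icc 1 K) (fun k => ‖ι (eu k)‖) :=
    abs_mul_discreteL2Norm (fun _ _ => norm_nonneg _) fun k hk => mul_norm_nonneg_of_abs_bilin_le
      (hγb _ (h.control_mem k (mem_Icc.1 hk).1 (mem_Icc.1 hk).2) _)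
  have hE : 0 ≤ discreteL2Norm τ (Icc 1 K) (fun k => ‖ι (eu k)‖) := discreteL2Norm_nonneg
  have hRy0 : 0 ≤ Ry := hRy ▸ discreteL2Norm_nonneg
  have hRp0 : 0 ≤ Rp := hRp ▸ discreteL2Norm_nonneg
  have hsqrt : 1 ≤ Real.sqrt 2 := Real.one_le_sqrt.2 one_le_two
  rw [← sq_discreteL2Norm hτ]
  set E := discreteL2Norm τ (Icc 1 K) (fun k => ‖ι (eu k)‖)
  calc E ^ 2
      ≤ (Ru + |γb| / αLB * Rp) * E + 2 / αLB * Ry * Rp + γc ^ 2 / (4 * αLB ^ 2) * Ry ^ 2 := by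
        rw [hRy, hRp, hRu]
        exact hsharp
    _ = Ru * E + 1 * (|γb| * E / αLB * Rp) + 2 * 1 / αLB * Ry * Rp
          + γc ^ 2 / (4 * αLB ^ 2) * Ry ^ 2 := by ring
    _ ≤ Ru * E + Real.sqrt 2 * (|γb| * E / αLB * Rp) + 2 * Real.sqrt 2 / αLB * Ry * Rp
          + γc ^ 2 / (2 * αLB ^ 2) * Ry ^ 2 := by
        gcongr
        norm_num
    _ = (Ru + Real.sqrt 2 * γb / αLB * Rp) * E + 2 * Real.sqrt 2 / αLB * Ry * Rp
          + γc ^ 2 / (2 * αLB ^ 2) * Ry ^ 2 := by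
        rw [habs]
        ring

end ErrorSystem

/-- Weak-constraint quadratic inequality for the control error. -/
theorem weak_constraint_quadratic_inequality
    {H Y D : Type*} [NormedAddCommGroup H] [InnerProductSpace ℝ H]
    [NormedAddCommGroup Y] [InnerProductSpace ℝ Y] [FiniteDimensional ℝ Y]
    [NormedAddCommGroup D] [InnerProductSpace ℝ D]
    (ι : Y →ₗ[ℝ] H) (hι : Function.Injective ι)
    (U : Submodule ℝ Y)
    (a : Y →ₗ[ℝ] (Y →ₗ[ℝ] ℝ))
    (τ : ℝ) (hτ : 0 < τ) (K : ℕ) (hK : 1 ≤ K)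
    (αLB : ℝ) (hαLB : 0 < αLB) (hcoer : ∀ v : Y, αLB * ‖v‖ ^ 2 ≤ a v v)
    (C : Y →ₗ[ℝ] D) (γc : ℝ) (hγc : ∀ v : Y, ‖C v‖ ≤ γc * ‖v‖)
    (b : Y →ₗ[ℝ] (Y →ₗ[ℝ] ℝ)) (γb : ℝ)
    (hγb : ∀ w ∈ U, ∀ v : Y, |b w v| ≤ γb * ‖ι w‖ * ‖v‖)
    (ey ep eu : ℕ → Y) (heu : ∀ k, 1 ≤ k → k ≤ K → eu k ∈ U)
    (ry rp ru : ℕ → (Y →ₗ[ℝ] ℝ))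
    (hstate : ∀ k, 1 ≤ k → k ≤ K → ∀ φ : Y,
      ⟪ι (ey k - ey (k - 1)), ι φ⟫ + τ * a (ey k) φ
        = τ * ry k φ + τ * b (eu k) φ)
    (hadj : ∀ k, 1 ≤ k → k ≤ K → ∀ φ : Y,
      ⟪ι φ, ι (ep k - ep (k + 1))⟫ + τ * a φ (ep k)
        = τ * rp k φ - τ * ⟪C (ey k), C φ⟫)
    (hopt : ∀ k, 1 ≤ k → k ≤ K → ∀ ψ ∈ U,
      ⟪ι (eu k), ι ψ⟫ - b ψ (ep k) = ru k ψ)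
    (hfin : ep (K + 1) = 0) (hinit : ey 0 = 0)
    (Ry Rp Ru : ℝ)
    (hRy : Ry = Real.sqrt (τ * ∑ k ∈ Icc 1 K, (dualNorm (fun v : Y => ‖v‖) Set.univ ⇑(ry k)) ^ 2))
    (hRp : Rp = Real.sqrt (τ * ∑ k ∈ Icc 1 K, (dualNorm (fun v : Y => ‖v‖) Set.univ ⇑(rp k)) ^ 2))
    (hRu : Ru = Real.sqrt (τ * ∑ k ∈ Icc 1 K, (dualNorm (fun v : Y => ‖ι v‖) (U : Set Y) ⇑(ru k)) ^ 2)) :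
    τ * ∑ k ∈ Icc 1 K, ‖ι (eu k)‖ ^ 2
      ≤ (Ru + Real.sqrt 2 * γb / αLB * Rp)
          * Real.sqrt (τ * ∑ k ∈ Icc 1 K, ‖ι (eu k)‖ ^ 2)
        + (2 * Real.sqrt 2 / αLB) * Ry * Rp + γc ^ 2 / (2 * αLB ^ 2) * Ry ^ 2 := by
  have hcont (r : Y →ₗ[ℝ] ℝ) : Continuous r := r.continuous_of_finiteDimensional
  exact weak_constraint_quadratic_inequality_general ι U a b C hτ.le K hαLB hcoer hγc hγb
    ⟨heu, hstate, hadj, hopt, hfin, hinit⟩ (fun k _ => hcont (ry k)) (fun k _ => hcont (rp k))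
    hRy hRp hRu
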